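/- arXiv:2305.09739 — 2 statements merged into one kernel-verified Lean document; each statement's English description precedes it below -/
import Mathlib

section
/- Consider a probability space (Ω, 𝔉, ℙ) and, for each i ∈ {1,…,n} with n ≥ 1, events A_i (resource i is in outage) and B_i (the predictor accepts resource i). Assume the pairs (A_i, B_i) are mutually independent across i (the σ-algebras generated by {A_i, B_i} for distinct i are mutually independent) and identically distributed, i.e. ℙ(A_i) = ℙ(A_1), ℙ(B_i) = ℙ(B_1) and ℙ(A_i ∩ B_i) = ℙ(A_1 ∩ B_1) for all i. Let the system outage event be E_n = (⋃_{i=1}^{n-1} (A_i ∩ B_i ∩ ⋂_{j<i} B_jᶜ)) ∪ (A_n ∩ ⋂_{j=1}^{n-1} B_jᶜ). If ℙ(B_1) > 0, then ℙ(E_n) = ℙ(A_1)·(1 − ℙ(B_1))^{n−1} + ℙ(A_1 | B_1)·(1 − (1 − ℙ(B_1))^{n−1}). -/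
open MeasureTheory ProbabilityTheory Filter

/-!
Exactly one of the following happens: some resource `i` is the first one accepted, or the first
`n` resources are all rejected. This splits the outage event into disjoint pieces, and
independence factors the probability of each piece. For identically distributed resources the
resulting sum is geometric with ratio `1 - ℙ(B)`, hence the factor `1 / ℙ(B)` that turns
`ℙ(A ∩ B)` into `ℙ(A | B)`.
-/

theorem geom_sum_mul_add_pow_of_add_eq_one {R : Type*} [CommSemiring R] {x y : R}
    (hxy : x + y = 1) (n : ℕ) : (∑ i ∈ Finset.range n, y ^ i) * x + y ^ n = 1 := by
  simpa only [hxy, one_pow, one_mul, Finset.sum_range_reflect (y ^ ·)]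
    using geom_sum₂_mul_add x y n

theorem geom_sum_one_sub_eq_div {b : ENNReal} (hb0 : b ≠ 0) (hb1 : b ≤ 1) (n : ℕ) :
    ∑ i ∈ Finset.range n, (1 - b) ^ i = (1 - (1 - b) ^ n) / b := by
  have hb : b ≠ ⊤ := ne_top_of_le_ne_top ENNReal.one_ne_top hb1
  have hpow : (1 - b) ^ n ≠ ⊤ := ENNReal.pow_ne_top (ENNReal.sub_ne_top ENNReal.one_ne_top)
  rw [ENNReal.eq_div_iff hb0 hb, mul_comm]
  exact ENNReal.eq_sub_of_add_eq hpow
    (geom_sum_mul_add_pow_of_add_eq_one (add_tsub_cancel_of_le hb1) n)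

section Allocation

variable {Ω : Type*}

/-- The outage event of greedy allocation among the `n + 1` resources `0, …, n`: resource `i` is
in outage on `A i` and accepted on `B i`; the first accepted resource is allocated, and resource
`n` is the fallback when `0, …, n - 1` are all rejected. -/
def greedyOutage (A B : ℕ → Set Ω) (n : ℕ) : Set Ω :=
  (⋃ i < n, (A i ∩ B i ∩ ⋂ j < i, (B j)ᶜ)) ∪ (A n ∩ ⋂ j < n, (B j)ᶜ)

theorem pairwise_disjoint_inter_biInter_lt_compl {ι : Type*} [LinearOrder ι] (A B : ι → Set Ω) :
    Pairwise (Function.onFun Disjoint fun i ↦ A i ∩ B i ∩ ⋂ j < i, (B j)ᶜ) :=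
  (pairwise_disjoint_on _).2 fun _ _ hik ↦ disjoint_compl_right.mono (fun _ hx ↦ hx.1.2)
    (Set.inter_subset_right.trans (Set.biInter_subset_of_mem hik))

theorem disjoint_biUnion_lt_biInter_lt_compl {ι : Type*} [Preorder ι] (A B : ι → Set Ω) (n : ι) :
    Disjoint (⋃ i < n, (A i ∩ B i ∩ ⋂ j < i, (B j)ᶜ)) (⋂ j < n, (B j)ᶜ) :=
  Set.disjoint_iUnion₂_left.2 fun _ hi ↦
    disjoint_compl_right.mono (fun _ hx ↦ hx.1.2) (Set.biInter_subset_of_mem hi)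

variable [mΩ : MeasurableSpace Ω] {μ : Measure Ω}

theorem measure_inter_biInter_compl_of_iIndep {ι : Type*} {m : ι → MeasurableSpace Ω}
    (hm : ∀ i, m i ≤ mΩ) (hindep : iIndep m μ) {S : Finset ι} {k : ι} (hk : k ∉ S)
    {C : Set Ω} (hC : MeasurableSet[m k] C)
    {B : ι → Set Ω} (hB : ∀ j ∈ S, MeasurableSet[m j] (B j)) :
    μ (C ∩ ⋂ j ∈ S, (B j)ᶜ) = μ C * ∏ j ∈ S, (1 - μ (B j)) := by
  classical
  have := hindep.isProbabilityMeasure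
  let s : ι → Set Ω := Function.update (fun j ↦ (B j)ᶜ) k C
  have hs_self : s k = C := Function.update_self ..
  have hs_of_mem : ∀ j ∈ S, s j = (B j)ᶜ := fun j hj ↦
    Function.update_of_ne (ne_of_mem_of_not_mem hj hk) ..
  have hs : ∀ j ∈ insert k S, MeasurableSet[m j] (s j) := by
    simp only [Finset.forall_mem_insert, hs_self]
    exact ⟨hC, fun j hj ↦ hs_of_mem j hj ▸ (hB j hj).compl⟩
  calc μ (C ∩ ⋂ j ∈ S, (B j)ᶜ)
      = μ (⋂ j ∈ insert k S, s j) := by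
        rw [Finset.set_biInter_insert, hs_self, Set.iInter₂_congr hs_of_mem]
    _ = μ C * ∏ j ∈ S, μ (B j)ᶜ := by
        rw [hindep.meas_biInter hs, Finset.prod_insert hk, hs_self,
          Finset.prod_congr rfl fun j hj ↦ congrArg μ (hs_of_mem j hj)]
    _ = μ C * ∏ j ∈ S, (1 - μ (B j)) := by
        rw [Finset.prod_congr rfl fun j hj ↦ prob_compl_eq_one_sub (hm j _ (hB j hj))]

theorem measure_greedyOutage {m : ℕ → MeasurableSpace Ω} (hm : ∀ i, m i ≤ mΩ)
    (hindep : iIndep m μ) {A B : ℕ → Set Ω} (hA : ∀ i, MeasurableSet[m i] (A i))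
    (hB : ∀ i, MeasurableSet[m i] (B i)) (n : ℕ) :
    μ (greedyOutage A B n) =
      ∑ i ∈ Finset.range n, μ (A i ∩ B i) * ∏ j ∈ Finset.range i, (1 - μ (B j)) +
        μ (A n) * ∏ j ∈ Finset.range n, (1 - μ (B j)) := by
  have measure_inter_rejected (k : ℕ) {C : Set Ω} (hC : MeasurableSet[m k] C) :
      μ (C ∩ ⋂ j < k, (B j)ᶜ) = μ C * ∏ j ∈ Finset.range k, (1 - μ (B j)) := by
    simpa only [Finset.mem_range] using measure_inter_biInter_compl_of_iIndep hm hindep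
      Finset.notMem_range_self hC fun j _ ↦ hB j
  have measurableSet_rejected (k : ℕ) : MeasurableSet (⋂ j < k, (B j)ᶜ) :=
    .iInter fun j ↦ .iInter fun _ ↦ (hm j _ (hB j)).compl
  have hAB (i : ℕ) : MeasurableSet[m i] (A i ∩ B i) := (hA i).inter (hB i)
  have hunion : μ (⋃ i < n, (A i ∩ B i ∩ ⋂ j < i, (B j)ᶜ)) =
      ∑ i ∈ Finset.range n, μ (A i ∩ B i ∩ ⋂ j < i, (B j)ᶜ) := by
    simpa only [Finset.mem_range] using measure_biUnion_finset (s := Finset.range n)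
      ((pairwise_disjoint_inter_biInter_lt_compl A B).set_pairwise _)
      fun i _ ↦ (hm i _ (hAB i)).inter (measurableSet_rejected i)
  rw [greedyOutage, measure_union
      ((disjoint_biUnion_lt_biInter_lt_compl A B n).mono_right Set.inter_subset_right)
      ((hm n _ (hA n)).inter (measurableSet_rejected n)),
    hunion, measure_inter_rejected n (hA n)]
  simp only [measure_inter_rejected _ (hAB _)]

end Allocation

/-- Outage probability of the greedy `n`-resource allocation system:
`A i` = resource `i` in outage, `B i` = predictor accepts resource `i`
(resources indexed `0, …, n-1`).  The system outage probability equals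
`P(A₀)·(1 − P(B₀))^(n−1) + P(A₀ | B₀)·(1 − (1 − P(B₀))^(n−1))`. -/
theorem stmt_0 {Ω : Type*} [MeasurableSpace Ω] (μ : Measure Ω) [IsProbabilityMeasure μ]
    (A B : ℕ → Set Ω)
    (hA : ∀ i, MeasurableSet (A i)) (hB : ∀ i, MeasurableSet (B i))
    (hindep : iIndep (fun i => MeasurableSpace.generateFrom {A i, B i}) μ)
    (hAid : ∀ i, μ (A i) = μ (A 0))
    (hBid : ∀ i, μ (B i) = μ (B 0))
    (hABid : ∀ i, μ (A i ∩ B i) = μ (A 0 ∩ B 0))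
    (n : ℕ) (hn : 1 ≤ n)
    (hB0 : 0 < μ (B 0)) :
    μ ((⋃ i < n - 1, (A i ∩ B i ∩ ⋂ j < i, (B j)ᶜ)) ∪ (A (n - 1) ∩ ⋂ j < n - 1, (B j)ᶜ))
      = μ (A 0) * (1 - μ (B 0)) ^ (n - 1)
        + (μ (A 0 ∩ B 0) / μ (B 0)) * (1 - (1 - μ (B 0)) ^ (n - 1)) := by
  have hle (i : ℕ) : MeasurableSpace.generateFrom {A i, B i} ≤ ‹MeasurableSpace Ω› :=
    MeasurableSpace.generateFrom_le <| by rintro _ (rfl | rfl); exacts [hA i, hB i]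
  have hAgen (i : ℕ) : MeasurableSet[.generateFrom {A i, B i}] (A i) :=
    MeasurableSpace.measurableSet_generateFrom (Set.mem_insert ..)
  have hBgen (i : ℕ) : MeasurableSet[.generateFrom {A i, B i}] (B i) :=
    MeasurableSpace.measurableSet_generateFrom (Set.mem_insert_of_mem _ rfl)
  calc μ (greedyOutage A B (n - 1))
      = μ (A 0 ∩ B 0) * ∑ i ∈ Finset.range (n - 1), (1 - μ (B 0)) ^ i +
          μ (A 0) * (1 - μ (B 0)) ^ (n - 1) := by
        simp only [measure_greedyOutage hle hindep hAgen hBgen, hAid (n - 1), hBid, hABid,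
          Finset.prod_const, Finset.card_range, Finset.mul_sum]
    _ = μ (A 0) * (1 - μ (B 0)) ^ (n - 1) +
          (μ (A 0 ∩ B 0) / μ (B 0)) * (1 - (1 - μ (B 0)) ^ (n - 1)) := by
        rw [geom_sum_one_sub_eq_div hB0.ne' prob_le_one, add_comm, ENNReal.mul_comm_div]
end

section
/- Consider a probability space (Ω, 𝔉, ℙ) and an infinite sequence of event pairs (A_i, B_i), i ∈ ℕ, that are mutually independent across i and identically distributed, i.e. ℙ(A_i) = ℙ(A_1), ℙ(B_i) = ℙ(B_1) and ℙ(A_i ∩ B_i) = ℙ(A_1 ∩ B_1) for all i. For each n ≥ 1 let E_n = (⋃_{i=1}^{n-1} (A_i ∩ B_i ∩ ⋂_{j<i} B_jᶜ)) ∪ (A_n ∩ ⋂_{j=1}^{n-1} B_jᶜ). If ℙ(B_1) > 0, then lim_{n→∞} ℙ(E_n) = ℙ(A_1 | B_1). -/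
open MeasureTheory ProbabilityTheory Filter

/-!
Almost surely some `B i` occurs, by the second Borel–Cantelli lemma, so in the limit the user gets
the first resource predicted to be good. By independence of the past, the first such resource `i`
is in outage with conditional probability `μ (A i ∩ B i) / μ (B i)`, the same for every `i`. The
fallback to the last resource is only reached when none of the earlier `B j` occurs, an event whose
probability tends to zero.
-/

section Measure

variable {Ω : Type*} [MeasurableSpace Ω] {μ : Measure Ω}

theorem tendsto_measure_union_of_tendsto_zero {ι : Type*} {l : Filter ι} {s t : ι → Set Ω}
    {a : ENNReal} (hs : Tendsto (fun i => μ (s i)) l (nhds a))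
    (ht : Tendsto (fun i => μ (t i)) l (nhds 0)) :
    Tendsto (fun i => μ (s i ∪ t i)) l (nhds a) := by
  have hst : Tendsto (fun i => μ (s i) + μ (t i)) l (nhds a) := by simpa using hs.add ht
  exact tendsto_of_tendsto_of_tendsto_of_le_of_le hs hst
    (fun _ => measure_mono Set.subset_union_left) (fun _ => measure_union_le _ _)

theorem tendsto_measure_biUnion_lt {ι : Type*} [Preorder ι] [NoMaxOrder ι]
    [IsCountablyGenerated (atTop : Filter ι)] (s : ι → Set Ω) :
    Tendsto (fun n => μ (⋃ i < n, s i)) atTop (nhds (μ (⋃ i, s i))) := by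
  rw [← Set.biUnion_lt_eq_iUnion]
  exact tendsto_measure_iUnion_atTop fun _ _ hmn =>
    Set.biUnion_subset_biUnion_left fun _ hi => lt_of_lt_of_le hi hmn

theorem tendsto_measure_biInter_lt {ι : Type*} [Preorder ι] [NoMaxOrder ι] [Nonempty ι]
    [Countable ι] [IsCountablyGenerated (atTop : Filter ι)] [IsFiniteMeasure μ] {s : ι → Set Ω}
    (hs : ∀ i, MeasurableSet (s i)) :
    Tendsto (fun n => μ (⋂ i < n, s i)) atTop (nhds (μ (⋂ i, s i))) := by
  have hmeas (n : ι) : MeasurableSet (⋂ i < n, s i) :=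
    .biInter (Set.to_countable (Set.Iio n)) fun i _ => hs i
  have hanti : Antitone fun n => ⋂ i < n, s i := fun _ _ hmn =>
    Set.biInter_subset_biInter_left fun _ hi => lt_of_lt_of_le hi hmn
  rw [← Set.biInter_lt_eq_iInter]
  exact tendsto_measure_iInter_atTop (fun n => (hmeas n).nullMeasurableSet) hanti
    ⟨Classical.arbitrary ι, measure_ne_top μ _⟩

theorem measure_iUnion_inter_of_pairwise_disjoint {ι : Type*} [Countable ι] {A D : ι → Set Ω}
    (hA : ∀ i, MeasurableSet (A i)) (hD : ∀ i, MeasurableSet (D i))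
    (hdisj : Pairwise fun i j => Disjoint (D i) (D j)) {c : ENNReal}
    (hc : ∀ i, μ (A i ∩ D i) = c * μ (D i)) :
    μ (⋃ i, A i ∩ D i) = c * μ (⋃ i, D i) := by
  have hdisj' : Pairwise fun i j => Disjoint (A i ∩ D i) (A j ∩ D j) := fun _ _ hij =>
    (hdisj hij).mono Set.inter_subset_right Set.inter_subset_right
  calc μ (⋃ i, A i ∩ D i)
      = ∑' i, μ (A i ∩ D i) := measure_iUnion hdisj' fun i => (hA i).inter (hD i)
    _ = c * ∑' i, μ (D i) := by simp_rw [hc, ENNReal.tsum_mul_left]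
    _ = c * μ (⋃ i, D i) := by rw [measure_iUnion hdisj hD]

end Measure

section Independence

variable {Ω ι : Type*} {mΩ : MeasurableSpace Ω} {μ : Measure Ω} {m : ι → MeasurableSpace Ω}

theorem measure_inter_biInter_of_iIndep (hm : ∀ i, m i ≤ mΩ) (hindep : iIndep m μ) {i : ι}
    {S : Set ι} (hS : S.Countable) (hi : i ∉ S) {s : Set Ω} (hs : MeasurableSet[m i] s)
    {t : ι → Set Ω} (ht : ∀ j ∈ S, MeasurableSet[m j] (t j)) :
    μ (s ∩ ⋂ j ∈ S, t j) = μ s * μ (⋂ j ∈ S, t j) := by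
  have hind : Indep (m i) (⨆ j ∈ S, m j) μ := by
    simpa only [Set.mem_singleton_iff, iSup_iSup_eq_left] using
      indep_iSup_of_disjoint hm hindep (Set.disjoint_singleton_left.2 hi)
  refine (Indep_iff _ _ μ).1 hind s _ hs ?_
  exact MeasurableSet.biInter hS fun j hj => le_iSup₂ (f := fun j _ => m j) j hj _ (ht j hj)

theorem measure_inter_disjointed_of_iIndep [Preorder ι] [LocallyFiniteOrderBot ι]
    (hm : ∀ i, m i ≤ mΩ) (hindep : iIndep m μ) {A B : ι → Set Ω}
    (hA : ∀ i, MeasurableSet[m i] (A i)) (hB : ∀ i, MeasurableSet[m i] (B i)) {c : ENNReal} {i : ι}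
    (hc : μ (A i ∩ B i) = c * μ (B i)) :
    μ (A i ∩ disjointed B i) = c * μ (disjointed B i) := by
  have hpast {s : Set Ω} (hs : MeasurableSet[m i] s) :
      μ (s ∩ ⋂ j < i, (B j)ᶜ) = μ s * μ (⋂ j < i, (B j)ᶜ) :=
    measure_inter_biInter_of_iIndep hm hindep (Set.finite_Iio i).countable Set.self_notMem_Iio hs
      fun j _ => (hB j).compl
  rw [disjointed_eq_inter_compl, ← Set.inter_assoc, hpast ((hA i).inter (hB i)), hpast (hB i), hc,
    mul_assoc]

theorem measure_iUnion_eq_one_of_iIndepSet {s : ℕ → Set Ω} (hs : ∀ i, MeasurableSet (s i))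
    (hindep : iIndepSet s μ) (hsum : ∑' i, μ (s i) = ⊤) : μ (⋃ i, s i) = 1 := by
  have : IsProbabilityMeasure μ := hindep.isProbabilityMeasure
  refine le_antisymm prob_le_one ?_
  rw [← measure_limsup_eq_one hs hindep hsum]
  exact measure_mono limsup_le_iSup

end Independence

/-- The hypothesis `hc` says `ℙ(A i | B i) = c`, multiplied out so that a null `B i` is allowed. -/
theorem stmt_2_general {Ω : Type*} [MeasurableSpace Ω] {μ : Measure Ω} {A B : ℕ → Set Ω}
    (hA : ∀ i, MeasurableSet (A i)) (hB : ∀ i, MeasurableSet (B i))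
    (hindep : iIndep (fun i => MeasurableSpace.generateFrom {A i, B i}) μ) {c : ENNReal}
    (hc : ∀ i, μ (A i ∩ B i) = c * μ (B i)) (hsum : ∑' i, μ (B i) = ⊤) :
    Tendsto
      (fun n : ℕ =>
        μ ((⋃ i < n - 1, (A i ∩ B i ∩ ⋂ j < i, (B j)ᶜ)) ∪ (A (n - 1) ∩ ⋂ j < n - 1, (B j)ᶜ)))
      atTop (nhds c) := by
  have : IsProbabilityMeasure μ := hindep.isProbabilityMeasure
  have hle (i : ℕ) : MeasurableSpace.generateFrom {A i, B i} ≤ ‹MeasurableSpace Ω› :=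
    MeasurableSpace.generateFrom_le (by simp [hA, hB])
  have hunion : μ (⋃ i, B i) = 1 := measure_iUnion_eq_one_of_iIndepSet hB
    (hindep.iIndepSets'.iIndepSet_of_mem (fun _ => .basic _ (by simp)) hB) hsum
  have hcond (i : ℕ) : μ (A i ∩ disjointed B i) = c * μ (disjointed B i) :=
    measure_inter_disjointed_of_iIndep hle hindep (fun _ => .basic _ (by simp))
      (fun _ => .basic _ (by simp)) (hc i)
  have hfirst : Tendsto (fun n => μ (⋃ i < n, A i ∩ disjointed B i)) atTop (nhds c) := by
    have hlim : μ (⋃ i, A i ∩ disjointed B i) = c := by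
      rw [measure_iUnion_inter_of_pairwise_disjoint hA (fun i => .disjointed hB i)
        (disjoint_disjointed B) hcond, iUnion_disjointed, hunion, mul_one]
    exact hlim ▸ tendsto_measure_biUnion_lt _
  have hnone : Tendsto (fun n => μ (⋂ j < n, (B j)ᶜ)) atTop (nhds 0) := by
    have hzero : μ (⋂ j, (B j)ᶜ) = 0 := by
      rwa [← Set.compl_iUnion, prob_compl_eq_zero_iff (.iUnion hB)]
    exact hzero ▸ tendsto_measure_biInter_lt fun j => (hB j).compl
  have hlast : Tendsto (fun n => μ (A n ∩ ⋂ j < n, (B j)ᶜ)) atTop (nhds 0) :=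
    tendsto_of_tendsto_of_tendsto_of_le_of_le tendsto_const_nhds hnone (fun _ => zero_le)
      fun _ => measure_mono Set.inter_subset_right
  simp_rw [Set.inter_assoc, ← disjointed_eq_inter_compl]
  exact (tendsto_measure_union_of_tendsto_zero hfirst hlast).comp (tendsto_sub_atTop_nat 1)

/-- The outage probability of the greedy `n`-resource system converges, as
`n → ∞`, to the conditional single-resource outage probability
`P(A₀ | B₀) = P(A₀ ∩ B₀)/P(B₀)`. -/
theorem stmt_2 {Ω : Type*} [MeasurableSpace Ω] (μ : Measure Ω) [IsProbabilityMeasure μ]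
    (A B : ℕ → Set Ω)
    (hA : ∀ i, MeasurableSet (A i)) (hB : ∀ i, MeasurableSet (B i))
    (hindep : iIndep (fun i => MeasurableSpace.generateFrom {A i, B i}) μ)
    (hAid : ∀ i, μ (A i) = μ (A 0))
    (hBid : ∀ i, μ (B i) = μ (B 0))
    (hABid : ∀ i, μ (A i ∩ B i) = μ (A 0 ∩ B 0))
    (hB0 : 0 < μ (B 0)) :
    Tendsto
      (fun n : ℕ =>
        μ ((⋃ i < n - 1, (A i ∩ B i ∩ ⋂ j < i, (B j)ᶜ)) ∪ (A (n - 1) ∩ ⋂ j < n - 1, (B j)ᶜ)))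
      atTop (nhds (μ (A 0 ∩ B 0) / μ (B 0))) :=
  stmt_2_general hA hB hindep
    (fun i => by rw [hABid, hBid i, ENNReal.div_mul_cancel hB0.ne' (measure_ne_top μ _)])
    (by simp_rw [hBid, ENNReal.tsum_const_eq_top_of_ne_zero hB0.ne'])
end
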